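/- arXiv:1512.00993 — 5 statements merged into one kernel-verified Lean document; each statement's English description precedes it below -/
import Mathlib

section
/- Let Ω ⊂ ℝ² be a convex open set with Lebesgue measure 1 and set r = (2π)^{-1/2} (so that an open ball of radius r has measure 1/2). For any two centers c₋, c₊ ∈ ℝ² with dist(c₋, c₊) ≥ 2r (so that the open balls B(c₋, r) and B(c₊, r) are disjoint), there exist centers c'₋, c'₊ ∈ ℝ² with dist(c'₋, c'₊) = 2r (tangent balls) such that vol(Ω △ (B(c'₋, r) ∪ B(c'₊, r))) ≤ vol(Ω △ (B(c₋, r) ∪ B(c₊, r))). In particular, the minimum in the definition of the Fraenkel 2-asymmetry of a convex set is attained by two tangent balls. -/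
open MeasureTheory Metric

/-!
The measure of the union of two disjoint balls of radius `r` is fixed, so minimising
`vol(Ω △ (B₋ ∪ B₊))` amounts to maximising `F(c₋) + F(c₊)`, where `F(c) = vol(Ω ∩ B(c, r))`.
For convex `Ω` the function `F` is quasi-concave (`min_volume_inter_ball_le`): by convexity
`Ω ∩ B(a c₀ + b c₁, r)` contains `a (Ω ∩ B(c₀, r)) + b (Ω ∩ B(c₁, r))` whenever `a + b = 1`,
and the Brunn–Minkowski inequality bounds the measure of the latter from below by the smaller of
the two measures. Hence, if `F(c₋) ≤ F(c₊)`, the point `c` of the segment `[c₋, c₊]` at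
distance `2r` from `c₊` satisfies `F(c) ≥ min (F(c₋)) (F(c₊)) = F(c₋)`, and the tangent pair
`(c, c₊)` does at least as well as `(c₋, c₊)`.

The form of Brunn–Minkowski needed in the plane, `min_volume_le`, follows from the one on the line,
`volume_add_le`. Let `f`, `g`, `h` be the lengths of the vertical slices of `A`, `B`,
`C ⊇ aA + bB`, and `M`, `N` the suprema of `f`, `g`. The one-dimensional inequality gives
`h(ax + by) ≥ a f(x) + b g(y) ≥ (aM + bN) min (f(x)/M) (g(y)/N)`; applied to
superlevel sets it gives (`lintegral_min_le`)
`|C| ≥ (aM + bN) (a|A|/M + b|B|/N)`, and `(aM + bN) (a/M + b/N) ≥ 1`.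
-/

open scoped Pointwise ENNReal

/-! ### Brunn–Minkowski on the line -/

/-- `K + L` contains the translates `K + min L` and `max K + L`, which share only the point
`max K + min L`. -/
lemma volume_add_le_of_isCompact {K L C : Set ℝ} (hK : IsCompact K) (hL : IsCompact L)
    (hKn : K.Nonempty) (hLn : L.Nonempty) (h : ∀ x ∈ K, ∀ y ∈ L, x + y ∈ C) :
    volume K + volume L ≤ volume C := by
  set a := sSup K with ha
  set b := sInf L with hb
  have haK : a ∈ K := hK.sSup_mem hKn
  have hbL : b ∈ L := hL.sInf_mem hLn
  have h1 : volume ((fun z => z + (-b)) ⁻¹' K) = volume K := measure_preimage_add_right _ _ _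
  have h2 : volume ((fun z => z + (-a)) ⁻¹' L) = volume L := measure_preimage_add_right _ _ _
  have hdisj : AEDisjoint volume ((fun z => z + (-b)) ⁻¹' K) ((fun z => z + (-a)) ⁻¹' L) := by
    refine measure_mono_null (t := {a + b}) ?_ (by simp)
    rintro z ⟨hz1, hz2⟩
    have e1 : z + (-b) ≤ a := le_csSup hK.bddAbove hz1
    have e2 : b ≤ z + (-a) := csInf_le hL.bddBelow hz2
    simp only [Set.mem_singleton_iff]
    linarith
  rw [← h1, ← h2, ← measure_union₀ _ hdisj]
  · refine measure_mono ?_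
    rintro z (hz | hz)
    · simpa using h _ hz _ hbL
    · simpa using h _ haK _ hz
  · exact ((hL.measurableSet).preimage (by fun_prop)).nullMeasurableSet

/-- One-dimensional Brunn–Minkowski inequality for measurable sets, by inner regularity. The set `C`
need not be measurable. -/
lemma volume_add_le {A B C : Set ℝ} (hA : MeasurableSet A) (hB : MeasurableSet B)
    (hAn : A.Nonempty) (hBn : B.Nonempty) {a b : ℝ} (ha : 0 < a) (hb : 0 < b)
    (h : ∀ x ∈ A, ∀ y ∈ B, a * x + b * y ∈ C) :
    ENNReal.ofReal a * volume A + ENNReal.ofReal b * volume B ≤ volume C := by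
  have key : ∀ K ⊆ A, IsCompact K → ∀ L ⊆ B, IsCompact L →
      ENNReal.ofReal a * volume K + ENNReal.ofReal b * volume L ≤ volume C := by
    intro K hKA hK L hLB hL
    -- A point is added to each compact set, since `K` or `L` may be empty.
    obtain ⟨x₀, hx₀⟩ := hAn
    obtain ⟨y₀, hy₀⟩ := hBn
    have := volume_add_le_of_isCompact (K := a • (insert x₀ K)) (L := b • (insert y₀ L)) (C := C)
      ((hK.insert x₀).smul a) ((hL.insert y₀).smul b)
      ((Set.insert_nonempty _ _).smul_set) ((Set.insert_nonempty _ _).smul_set) ?_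
    · rw [Measure.addHaar_smul, Measure.addHaar_smul] at this
      simp only [Module.finrank_self, pow_one, abs_of_pos ha, abs_of_pos hb] at this
      refine le_trans ?_ this
      gcongr <;> exact Set.subset_insert _ _
    · rintro _ ⟨x, hx, rfl⟩ _ ⟨y, hy, rfl⟩
      exact h x (Set.insert_subset hx₀ hKA hx) y (Set.insert_subset hy₀ hLB hy)
  rw [hA.measure_eq_iSup_isCompact, hB.measure_eq_iSup_isCompact]
  simp only [ENNReal.mul_iSup, iSup_and']
  exact ENNReal.biSup_add_biSup_le' ⟨∅, by simp⟩ ⟨∅, by simp⟩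
    fun K hK L hL => key K hK.1 hK.2 L hL.1 hL.2

/-- A one-dimensional Prékopa–Leindler type inequality for functions of supremum one: the level set
`{h > s}` contains `a {f > s} + b {g > s}`, and both summands are nonempty exactly when `s < 1`. -/
lemma lintegral_min_le {f g h : ℝ → ℝ} (hf : Measurable f) (hg : Measurable g)
    (hh : Measurable h) (hf0 : ∀ x, 0 ≤ f x) (hg0 : ∀ x, 0 ≤ g x) (hh0 : ∀ x, 0 ≤ h x)
    (hf1 : ∀ x, f x ≤ 1) (hg1 : ∀ x, g x ≤ 1)
    (hfs : ∀ s < 1, ∃ x, s < f x) (hgs : ∀ s < 1, ∃ x, s < g x)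
    {a b : ℝ} (ha : 0 < a) (hb : 0 < b)
    (H : ∀ x y, 0 < f x → 0 < g y → min (f x) (g y) ≤ h (a * x + b * y)) :
    ENNReal.ofReal a * (∫⁻ x, ENNReal.ofReal (f x)) +
        ENNReal.ofReal b * (∫⁻ x, ENNReal.ofReal (g x))
      ≤ ∫⁻ x, ENNReal.ofReal (h x) := by
  rw [lintegral_eq_lintegral_meas_lt _ (.of_forall hf0) hf.aemeasurable,
    lintegral_eq_lintegral_meas_lt _ (.of_forall hg0) hg.aemeasurable,
    lintegral_eq_lintegral_meas_lt _ (.of_forall hh0) hh.aemeasurable,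
    ← lintegral_const_mul' _ _ ENNReal.ofReal_ne_top,
    ← lintegral_const_mul' _ _ ENNReal.ofReal_ne_top, ← lintegral_add_left]
  · refine setLIntegral_mono' measurableSet_Ioi fun s (hs : 0 < s) => ?_
    rcases lt_or_ge s 1 with hs1 | hs1
    · refine volume_add_le (measurableSet_lt measurable_const hf)
        (measurableSet_lt measurable_const hg) (hfs s hs1) (hgs s hs1) ha hb ?_
      intro x hx y hy
      exact (lt_min hx hy).trans_le (H x y (hs.trans hx) (hs.trans hy))
    · have e1 : {x | s < f x} = ∅ := by
        ext x; simpa using (hf1 x).trans hs1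
      have e2 : {x | s < g x} = ∅ := by
        ext x; simpa using (hg1 x).trans hs1
      simp [e1, e2]
  · refine Measurable.const_mul (Antitone.measurable fun s t hst => ?_) _
    exact measure_mono fun x hx => hst.trans_lt hx

/-! ### Brunn–Minkowski in the plane -/

/-- The length of the vertical slice `{y | (x, y) ∈ A}`, as a real number (zero if the slice has
infinite length, which does not happen for bounded `A`). -/
noncomputable def sliceLength (A : Set (ℝ × ℝ)) (x : ℝ) : ℝ := volume.real (Prod.mk x ⁻¹' A)

lemma exists_volume_slice_le {A : Set (ℝ × ℝ)} (hA : Bornology.IsBounded A) :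
    ∃ R : ℝ, 0 ≤ R ∧ ∀ x, volume (Prod.mk x ⁻¹' A) ≤ ENNReal.ofReal R := by
  obtain ⟨R, hR⟩ := hA.subset_closedBall 0
  refine ⟨2 * max R 0, by positivity, fun x => ?_⟩
  calc volume (Prod.mk x ⁻¹' A) ≤ volume (closedBall (0 : ℝ) (max R 0)) := by
        refine measure_mono fun y hy => ?_
        have := hR hy
        simp only [mem_closedBall, dist_zero_right, Prod.norm_def] at this ⊢
        exact ((le_max_right _ _).trans this).trans (le_max_left _ _)
    _ = _ := by rw [Real.volume_closedBall]

lemma ofReal_sliceLength {A : Set (ℝ × ℝ)} (hA : Bornology.IsBounded A) (x : ℝ) :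
    ENNReal.ofReal (sliceLength A x) = volume (Prod.mk x ⁻¹' A) := by
  obtain ⟨R, -, hR⟩ := exists_volume_slice_le hA
  exact ENNReal.ofReal_toReal ((hR x).trans_lt ENNReal.ofReal_lt_top).ne

lemma measurable_sliceLength {A : Set (ℝ × ℝ)} (hA : MeasurableSet A) :
    Measurable (sliceLength A) :=
  (measurable_measure_prodMk_left hA).ennreal_toReal

lemma lintegral_sliceLength {A : Set (ℝ × ℝ)} (hA : MeasurableSet A)
    (hb : Bornology.IsBounded A) :
    ∫⁻ x, ENNReal.ofReal (sliceLength A x) = volume A := by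
  simp_rw [ofReal_sliceLength hb]
  rw [Measure.volume_eq_prod, Measure.prod_apply hA]

/-- `M` is the supremum of the slice lengths of `A`. -/
lemma exists_max_sliceLength {A : Set (ℝ × ℝ)} (hA : MeasurableSet A) (hb : Bornology.IsBounded A)
    (hpos : volume A ≠ 0) :
    ∃ M : ℝ, 0 < M ∧ (∀ x, sliceLength A x ≤ M) ∧ ∀ s < 1, ∃ x, s < sliceLength A x / M := by
  obtain ⟨R, hR0, hR⟩ := exists_volume_slice_le hb
  have hbdd : BddAbove (Set.range (sliceLength A)) := by
    refine ⟨R, ?_⟩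
    rintro _ ⟨x, rfl⟩
    exact ENNReal.toReal_le_of_le_ofReal hR0 (hR x)
  have hle : ∀ x, sliceLength A x ≤ sSup (Set.range (sliceLength A)) :=
    fun x => le_csSup hbdd ⟨x, rfl⟩
  have hM : 0 < sSup (Set.range (sliceLength A)) := by
    by_contra! hneg
    refine hpos ?_
    rw [← lintegral_sliceLength hA hb]
    simp [fun x => ENNReal.ofReal_of_nonpos ((hle x).trans hneg)]
  refine ⟨_, hM, hle, fun s hs => ?_⟩
  obtain ⟨_, ⟨x, rfl⟩, hx⟩ := exists_lt_of_lt_csSup (Set.range_nonempty (sliceLength A))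
    (mul_lt_of_lt_one_left hM hs)
  exact ⟨x, (lt_div_iff₀ hM).2 hx⟩

/-- Quasi-concave form of the Brunn–Minkowski inequality in the plane. -/
lemma min_volume_le {A B C : Set (ℝ × ℝ)} (hA : MeasurableSet A) (hB : MeasurableSet B)
    (hC : MeasurableSet C) (hAb : Bornology.IsBounded A) (hBb : Bornology.IsBounded B)
    (hCb : Bornology.IsBounded C) {a b : ℝ} (ha : 0 < a) (hb : 0 < b) (hab : a + b = 1)
    (h : ∀ p ∈ A, ∀ q ∈ B, a • p + b • q ∈ C) :
    min (volume A) (volume B) ≤ volume C := by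
  by_cases hA0 : volume A = 0
  · simp [hA0]
  by_cases hB0 : volume B = 0
  · simp [hB0]
  obtain ⟨M, hM, hMle, hMs⟩ := exists_max_sliceLength hA hAb hA0
  obtain ⟨N, hN, hNle, hNs⟩ := exists_max_sliceLength hB hBb hB0
  set D := a * M + b * N with hD
  have hDpos : 0 < D := by positivity
  have hnn : ∀ (S : Set (ℝ × ℝ)) x, 0 ≤ sliceLength S x := fun S x => measureReal_nonneg
  have scale : ∀ {S : Set (ℝ × ℝ)} {c : ℝ}, 0 < c → MeasurableSet S → Bornology.IsBounded S →
      ∫⁻ x, ENNReal.ofReal (sliceLength S x / c) = ENNReal.ofReal c⁻¹ * volume S := by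
    intro S c hc hS hSb
    rw [← lintegral_sliceLength hS hSb, ← lintegral_const_mul' _ _ ENNReal.ofReal_ne_top]
    refine lintegral_congr fun x => ?_
    rw [← ENNReal.ofReal_mul (by positivity), div_eq_inv_mul]
  have main := lintegral_min_le (f := fun x => sliceLength A x / M)
    (g := fun x => sliceLength B x / N) (h := fun x => sliceLength C x / D)
    ((measurable_sliceLength hA).div_const _) ((measurable_sliceLength hB).div_const _)
    ((measurable_sliceLength hC).div_const _)
    (fun x => div_nonneg (hnn _ _) hM.le) (fun x => div_nonneg (hnn _ _) hN.le)
    (fun x => div_nonneg (hnn _ _) hDpos.le)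
    (fun x => (div_le_one hM).2 (hMle x)) (fun x => (div_le_one hN).2 (hNle x))
    hMs hNs ha hb ?_
  · rw [scale hM hA hAb, scale hN hB hBb, scale hDpos hC hCb] at main
    set V := min (volume A) (volume B)
    have h1 : ENNReal.ofReal (a * M⁻¹ + b * N⁻¹) * V ≤ ENNReal.ofReal D⁻¹ * volume C := by
      refine le_trans ?_ main
      rw [ENNReal.ofReal_add (by positivity) (by positivity), ENNReal.ofReal_mul ha.le,
        ENNReal.ofReal_mul hb.le, add_mul, mul_assoc, mul_assoc]
      gcongr
      · exact min_le_left _ _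
      · exact min_le_right _ _
    -- Convexity of the inverse: `(a M + b N)⁻¹ ≤ a M⁻¹ + b N⁻¹`.
    have h2 : D⁻¹ ≤ a * M⁻¹ + b * N⁻¹ := by
      have e : a * M⁻¹ + b * N⁻¹ = (a * N + b * M) / (M * N) := by field_simp
      rw [e, inv_eq_one_div, div_le_div_iff₀ hDpos (by positivity), hD]
      obtain rfl : b = 1 - a := by linarith
      nlinarith [mul_nonneg (mul_nonneg ha.le hb.le) (sq_nonneg (M - N))]
    have h3 : ENNReal.ofReal D⁻¹ * V ≤ ENNReal.ofReal D⁻¹ * volume C :=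
      le_trans (by gcongr) h1
    exact (ENNReal.mul_le_mul_iff_right (by simpa using hDpos) ENNReal.ofReal_ne_top).1 h3
  · intro x y hx hy
    have hx' : 0 < sliceLength A x := by
      by_contra! hneg
      exact hx.not_ge (div_nonpos_of_nonpos_of_nonneg hneg hM.le)
    have hy' : 0 < sliceLength B y := by
      by_contra! hneg
      exact hy.not_ge (div_nonpos_of_nonpos_of_nonneg hneg hN.le)
    have ne : ∀ {S : Set (ℝ × ℝ)} {z}, 0 < sliceLength S z → (Prod.mk z ⁻¹' S).Nonempty := by
      intro S z hz
      by_contra! hE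
      simp [sliceLength, hE] at hz
    have h1 := volume_add_le (hA.preimage measurable_prodMk_left)
      (hB.preimage measurable_prodMk_left) (ne hx') (ne hy') ha hb
      (C := Prod.mk (a * x + b * y) ⁻¹' C) (fun u hu v hv => by simpa using h _ hu _ hv)
    rw [← ofReal_sliceLength hAb, ← ofReal_sliceLength hBb, ← ofReal_sliceLength hCb,
      ← ENNReal.ofReal_mul ha.le, ← ENNReal.ofReal_mul hb.le,
      ← ENNReal.ofReal_add (by positivity) (by positivity),
      ENNReal.ofReal_le_ofReal_iff (hnn _ _)] at h1
    rw [le_div_iff₀ hDpos]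
    refine le_trans ?_ h1
    set m := min (sliceLength A x / M) (sliceLength B y / N)
    have m1 : m * M ≤ sliceLength A x := (le_div_iff₀ hM).1 (min_le_left _ _)
    have m2 : m * N ≤ sliceLength B y := (le_div_iff₀ hN).1 (min_le_right _ _)
    rw [hD]
    nlinarith

/-! ### Moving one ball towards the other -/

/-- For convex `Ω`, the function `c ↦ vol(Ω ∩ B(c, r))` is quasi-concave. -/
lemma min_volume_inter_ball_le {Ω : Set (EuclideanSpace ℝ (Fin 2))} (hΩ : IsOpen Ω)
    (hconv : Convex ℝ Ω) (r : ℝ) (c₀ c₁ : EuclideanSpace ℝ (Fin 2)) {a b : ℝ} (ha : 0 < a)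
    (hb : 0 < b) (hab : a + b = 1) :
    min (volume (Ω ∩ ball c₀ r)) (volume (Ω ∩ ball c₁ r))
      ≤ volume (Ω ∩ ball (a • c₀ + b • c₁) r) := by
  set φ : ℝ × ℝ → EuclideanSpace ℝ (Fin 2) := fun p => !₂[p.1, p.2] with hφ
  have hcont : Continuous φ := by fun_prop
  have hmp : MeasurePreserving φ :=
    (PiLp.volume_preserving_toLp (Fin 2)).comp
      (volume_preserving_finTwoArrow ℝ).symm
  have hlin : ∀ p q, φ (a • p + b • q) = a • φ p + b • φ q := by
    intro p q; ext i; fin_cases i <;> simp [hφ]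
  have hopen : ∀ c, IsOpen (Ω ∩ ball c r) := fun c => hΩ.inter isOpen_ball
  have hbdd : ∀ c, Bornology.IsBounded (φ ⁻¹' (Ω ∩ ball c r)) := by
    intro c
    have hanti : AntilipschitzWith 1 φ := by
      refine AntilipschitzWith.of_le_mul_dist fun p q => ?_
      rw [NNReal.coe_one, one_mul, Prod.dist_eq]
      refine max_le ?_ ?_
      · simpa [hφ] using PiLp.dist_apply_le (φ p) (φ q) 0
      · simpa [hφ] using PiLp.dist_apply_le (φ p) (φ q) 1
    exact hanti.isBounded_preimage (isBounded_ball.subset Set.inter_subset_right)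
  have hm : ∀ c, MeasurableSet (φ ⁻¹' (Ω ∩ ball c r)) := fun c =>
    ((hopen c).preimage hcont).measurableSet
  have hv : ∀ c, volume (Ω ∩ ball c r) = volume (φ ⁻¹' (Ω ∩ ball c r)) := fun c =>
    (hmp.measure_preimage (hopen c).measurableSet.nullMeasurableSet).symm
  rw [hv, hv, hv]
  refine min_volume_le (hm _) (hm _) (hm _) (hbdd _) (hbdd _) (hbdd _) ha hb hab ?_
  rintro p ⟨hp1, hp2⟩ q ⟨hq1, hq2⟩
  rw [Set.mem_preimage, hlin]
  refine ⟨hconv hp1 hq1 ha.le hb.le hab, ?_⟩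
  rw [mem_ball_iff_norm] at *
  calc ‖a • φ p + b • φ q - (a • c₀ + b • c₁)‖
      = ‖a • (φ p - c₀) + b • (φ q - c₁)‖ := by congr 1; module
    _ ≤ ‖a • (φ p - c₀)‖ + ‖b • (φ q - c₁)‖ := norm_add_le _ _
    _ = a * ‖φ p - c₀‖ + b * ‖φ q - c₁‖ := by
        rw [norm_smul, norm_smul, Real.norm_of_nonneg ha.le, Real.norm_of_nonneg hb.le]
    _ < a * r + b * r := by gcongr
    _ = r := by rw [← add_mul, hab, one_mul]

lemma volume_symmDiff_le {Ω U V : Set (EuclideanSpace ℝ (Fin 2))} (hΩ : MeasurableSet Ω)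
    (hU : MeasurableSet U) (hV : MeasurableSet V) (hΩf : volume Ω ≠ ∞)
    (hUV : volume U = volume V) (h : volume (Ω ∩ U) ≤ volume (Ω ∩ V)) :
    volume (symmDiff Ω V) ≤ volume (symmDiff Ω U) := by
  rw [measure_symmDiff_eq hΩ.nullMeasurableSet hV.nullMeasurableSet,
    measure_symmDiff_eq hΩ.nullMeasurableSet hU.nullMeasurableSet]
  have fin : volume (Ω ∩ V) ≠ ∞ := measure_ne_top_of_subset Set.inter_subset_left hΩf
  have fin' : volume (Ω ∩ U) ≠ ∞ := measure_ne_top_of_subset Set.inter_subset_left hΩf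
  rw [← Set.sdiff_inter_self_eq_sdiff (s := V), ← Set.sdiff_inter_self_eq_sdiff (s := U),
    ← Set.sdiff_self_inter (s := Ω) (t := V), ← Set.sdiff_self_inter (s := Ω) (t := U),
    measure_sdiff Set.inter_subset_left (hΩ.inter hV).nullMeasurableSet fin,
    measure_sdiff Set.inter_subset_left (hΩ.inter hU).nullMeasurableSet fin',
    measure_sdiff Set.inter_subset_right (hΩ.inter hV).nullMeasurableSet fin,
    measure_sdiff Set.inter_subset_right (hΩ.inter hU).nullMeasurableSet fin', hUV]
  gcongr

/-- The ball that covers less of `Ω` is moved along the segment of centers until it touches the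
other one. -/
lemma exists_tangent_of_le {Ω : Set (EuclideanSpace ℝ (Fin 2))}
    (hΩopen : IsOpen Ω) (hΩconv : Convex ℝ Ω) (hΩf : volume Ω ≠ ∞)
    {r : ℝ} (hr : 0 < r) {c₀ c₁ : EuclideanSpace ℝ (Fin 2)} (hdist : 2 * r ≤ dist c₀ c₁)
    (hle : volume (Ω ∩ ball c₀ r) ≤ volume (Ω ∩ ball c₁ r)) :
    ∃ c : EuclideanSpace ℝ (Fin 2), dist c c₁ = 2 * r ∧
      volume (symmDiff Ω (ball c r ∪ ball c₁ r)) ≤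
        volume (symmDiff Ω (ball c₀ r ∪ ball c₁ r)) := by
  rcases hdist.eq_or_lt with heq | hlt
  · exact ⟨c₀, heq.symm, le_rfl⟩
  have hd : 0 < dist c₀ c₁ := by linarith
  set a := 2 * r / dist c₀ c₁ with ha
  have ha0 : 0 < a := by positivity
  have ha1 : a < 1 := (div_lt_one hd).2 hlt
  set c := a • c₀ + (1 - a) • c₁ with hc
  have hcd : dist c c₁ = 2 * r := by
    have : c - c₁ = a • (c₀ - c₁) := by rw [hc]; module
    rw [dist_eq_norm, this, norm_smul, Real.norm_of_nonneg ha0.le, ← dist_eq_norm, ha]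
    field_simp
  refine ⟨c, hcd, ?_⟩
  have key : volume (Ω ∩ ball c₀ r) ≤ volume (Ω ∩ ball c r) := by
    have := min_volume_inter_ball_le hΩopen hΩconv r c₀ c₁ ha0 (sub_pos.2 ha1) (by ring)
    rwa [min_eq_left hle] at this
  have dis : ∀ x : EuclideanSpace ℝ (Fin 2), 2 * r ≤ dist x c₁ →
      Disjoint (ball x r) (ball c₁ r) := fun x hx => ball_disjoint_ball (by linarith)
  have vol : ∀ x : EuclideanSpace ℝ (Fin 2), 2 * r ≤ dist x c₁ →
      volume (ball x r ∪ ball c₁ r) = volume (ball x r) + volume (ball c₁ r) :=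
    fun x hx => measure_union (dis x hx) measurableSet_ball
  have voli : ∀ x : EuclideanSpace ℝ (Fin 2), 2 * r ≤ dist x c₁ →
      volume (Ω ∩ (ball x r ∪ ball c₁ r)) = volume (Ω ∩ ball x r) + volume (Ω ∩ ball c₁ r) := by
    intro x hx
    rw [Set.inter_union_distrib_left]
    exact measure_union ((dis x hx).mono Set.inter_subset_right Set.inter_subset_right)
      (hΩopen.inter isOpen_ball).measurableSet
  refine volume_symmDiff_le hΩopen.measurableSet (measurableSet_ball.union measurableSet_ball)
    (measurableSet_ball.union measurableSet_ball) hΩf ?_ ?_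
  · rw [vol _ hdist, vol _ hcd.ge, Measure.addHaar_ball_center _ c₀,
      Measure.addHaar_ball_center _ c]
  · rw [voli _ hdist, voli _ hcd.ge]
    gcongr

/-- For a convex open set `Ω ⊂ ℝ²` of measure one, the minimum in the
definition of the Fraenkel 2-asymmetry is attained by two tangent balls: any pair of
disjoint open balls of measure `1/2` (radius `r = (2π)^{-1/2}`, centers at distance
`≥ 2r`) can be replaced by a pair of tangent balls (centers at distance `= 2r`)
without increasing the measure of the symmetric difference with `Ω`. -/
theorem tangent_balls_better (Ω : Set (EuclideanSpace ℝ (Fin 2)))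
    (hΩopen : IsOpen Ω) (hΩconv : Convex ℝ Ω) (hΩvol : volume Ω = 1)
    (r : ℝ) (hr : r = 1 / Real.sqrt (2 * Real.pi))
    (cm cp : EuclideanSpace ℝ (Fin 2)) (hdist : 2 * r ≤ dist cm cp) :
    ∃ cm' cp' : EuclideanSpace ℝ (Fin 2), dist cm' cp' = 2 * r ∧
      volume (symmDiff Ω (ball cm' r ∪ ball cp' r)) ≤
        volume (symmDiff Ω (ball cm r ∪ ball cp r)) := by
  have hr0 : 0 < r := by rw [hr]; positivity
  have hΩf : volume Ω ≠ ∞ := by simp [hΩvol]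
  rcases le_total (volume (Ω ∩ ball cm r)) (volume (Ω ∩ ball cp r)) with hle | hle
  · obtain ⟨c, hc, h⟩ := exists_tangent_of_le hΩopen hΩconv hΩf hr0 hdist hle
    exact ⟨c, cp, hc, h⟩
  · obtain ⟨c, hc, h⟩ := exists_tangent_of_le hΩopen hΩconv hΩf hr0 (dist_comm cm cp ▸ hdist) hle
    refine ⟨c, cm, hc, ?_⟩
    rwa [Set.union_comm (ball cm r)]
end

section
/- (The rescaled convex combination strictly increases along minimizers.) Let s, t ∈ (0,1) with s < t, let x minimize F_s and y minimize F_t, and assume λ₁(y) > 0. Then (s/(1−s))·λ₁(x) + λ₂(x) < (t/(1−t))·λ₁(y) + λ₂(y), i.e., F_s(x)/(1−s) < F_t(y)/(1−t). -/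
/-- In the abstract setting of problem (P): if `s < t` in `(0,1)`,
`x` minimizes `F_s`, `y` minimizes `F_t` and `λ₁(y) > 0`, then the rescaled convex
combination strictly increases: `F_s(x)/(1−s) < F_t(y)/(1−t)`, i.e.
`(s/(1−s))·λ₁(x) + λ₂(x) < (t/(1−t))·λ₁(y) + λ₂(y)`. -/
theorem rescaled_combination_increasing {ι : Type*} [Nonempty ι] (lam1 lam2 : ι → ℝ)
    (s t : ℝ) (hs : s ∈ Set.Ioo (0:ℝ) 1) (ht : t ∈ Set.Ioo (0:ℝ) 1) (hst : s < t)
    (x y : ι)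
    (hx : ∀ z : ι, s * lam1 x + (1 - s) * lam2 x ≤ s * lam1 z + (1 - s) * lam2 z)
    (hy : ∀ z : ι, t * lam1 y + (1 - t) * lam2 y ≤ t * lam1 z + (1 - t) * lam2 z)
    (hpos : 0 < lam1 y) :
    s / (1 - s) * lam1 x + lam2 x < t / (1 - t) * lam1 y + lam2 y := by
  have hs1 : 0 < 1 - s := sub_pos.2 hs.2
  have ht1 : 0 < 1 - t := sub_pos.2 ht.2
  calc s / (1 - s) * lam1 x + lam2 x
      = (s * lam1 x + (1 - s) * lam2 x) / (1 - s) := by field_simp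
    -- Test the minimality of `x` for `F_s` against the competitor `y`.
    _ ≤ (s * lam1 y + (1 - s) * lam2 y) / (1 - s) :=
        div_le_div_of_nonneg_right (hx y) hs1.le
    _ = s / (1 - s) * lam1 y + lam2 y := by field_simp
    -- The weight `r ↦ r / (1 - r)` is strictly increasing on `(0, 1)`, and `lam1 y > 0`.
    _ < t / (1 - t) * lam1 y + lam2 y := by
        have h : s / (1 - s) < t / (1 - t) := by
          rw [div_lt_div_iff₀ hs1 ht1]
          linarith
        gcongr
end

section
/- (Abstract form of Theorem 4.2 i): vertical tangent at the ball.) Let Ω : (0,1) → ι be such that for every t ∈ (0,1), Ω(t) minimizes F_t, and let b ∈ ι satisfy λ₁(b) < λ₁(Ω(t)) for every t ∈ (0,1) (abstracting the strict Faber–Krahn inequality since no minimizer is a ball). Then the function t ↦ (λ₂(Ω(t)) − λ₂(b)) / (λ₁(Ω(t)) − λ₁(b)) tends to −∞ as t → 1 from the left (along the filter of neighborhoods of 1 within (0,1)). -/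
open Filter

/-- **Statement 16 (abstract form of Theorem 4.2 i): vertical tangent at the ball).**
In the abstract setting of problem (P): if `Ω t` minimizes `F_t` for every `t ∈ (0,1)`
and `b` satisfies `λ₁(b) < λ₁(Ω t)` for every `t ∈ (0,1)` (strict Faber–Krahn
inequality since no minimizer is a ball), then
`(λ₂(Ω t) − λ₂(b)) / (λ₁(Ω t) − λ₁(b)) → −∞` as `t → 1⁻` within `(0,1)`. -/
theorem vertical_tangent_at_ball {ι : Type*} [Nonempty ι] (lam1 lam2 : ι → ℝ)
    (Ω : ℝ → ι)
    (hmin : ∀ t ∈ Set.Ioo (0:ℝ) 1, ∀ z : ι,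
      t * lam1 (Ω t) + (1 - t) * lam2 (Ω t) ≤ t * lam1 z + (1 - t) * lam2 z)
    (b : ι) (hFK : ∀ t ∈ Set.Ioo (0:ℝ) 1, lam1 b < lam1 (Ω t)) :
    Tendsto (fun t : ℝ => (lam2 (Ω t) - lam2 b) / (lam1 (Ω t) - lam1 b))
      (nhdsWithin 1 (Set.Ioo (0:ℝ) 1)) atBot := by
  rw [tendsto_atBot]
  intro M
  -- Minimality against `b` bounds the quotient by `-t / (1 - t)`, and
  -- `-t / (1 - t) ≤ M` is equivalent to `(1 - M) * (1 - t) ≤ 1`, which holds near `t = 1`.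
  have hnear : ∀ᶠ t : ℝ in nhdsWithin 1 (Set.Ioo (0:ℝ) 1), (1 - M) * (1 - t) < 1 := by
    have hc : Continuous fun t : ℝ => (1 - M) * (1 - t) := by fun_prop
    exact nhdsWithin_le_nhds (hc.continuousAt.eventually_lt_const (by norm_num))
  filter_upwards [hnear, self_mem_nhdsWithin] with t ht hmem
  have hD : 0 < lam1 (Ω t) - lam1 b := sub_pos.2 (hFK t hmem)
  have ht1 : 0 < 1 - t := sub_pos.2 hmem.2
  rw [div_le_iff₀ hD]
  refine le_of_mul_le_mul_left ?_ ht1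
  have hcoef : 0 ≤ (M * (1 - t) + t) * (lam1 (Ω t) - lam1 b) :=
    mul_nonneg (by linarith) hD.le
  linarith [hmin t hmem b]
end

section
/- (Abstract form of Theorem 4.2 ii): horizontal tangent at two balls.) Let Ω : (0,1) → ι be such that for every t ∈ (0,1), Ω(t) minimizes F_t, and let θ ∈ ι satisfy λ₂(θ) < λ₂(Ω(t)) for every t ∈ (0,1) (abstracting the strict Krahn–Szegő inequality since minimizers are connected). Then the function t ↦ (λ₂(Ω(t)) − λ₂(θ)) / (λ₁(Ω(t)) − λ₁(θ)) tends to 0 as t → 0 from the right (along the filter of neighborhoods of 0 within (0,1)). -/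
/-!
Write `a = λ₂(Ω t) - λ₂(θ)` and `b = λ₁(Ω t) - λ₁(θ)`. Testing the minimality of `Ω t` for `F_t`
against `θ` gives `t * b + (1 - t) * a ≤ 0`. Since `a > 0`, this forces `b < 0`, and dividing by
`b` traps the quotient: `-t / (1 - t) ≤ a / b ≤ 0`. The lower bound tends to `0` as `t → 0⁺`.
-/

open Filter

/-- **Statement 17 (abstract form of Theorem 4.2 ii): horizontal tangent at two
balls).** In the abstract setting of problem (P): if `Ω t` minimizes `F_t` for every
`t ∈ (0,1)` and `θ` satisfies `λ₂(θ) < λ₂(Ω t)` for every `t ∈ (0,1)` (strict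
Krahn–Szegő inequality since minimizers are connected), then
`(λ₂(Ω t) − λ₂(θ)) / (λ₁(Ω t) − λ₁(θ)) → 0` as `t → 0⁺` within `(0,1)`. -/
theorem horizontal_tangent_at_two_balls {ι : Type*} [Nonempty ι] (lam1 lam2 : ι → ℝ)
    (Ω : ℝ → ι)
    (hmin : ∀ t ∈ Set.Ioo (0:ℝ) 1, ∀ z : ι,
      t * lam1 (Ω t) + (1 - t) * lam2 (Ω t) ≤ t * lam1 z + (1 - t) * lam2 z)
    (θ : ι) (hKS : ∀ t ∈ Set.Ioo (0:ℝ) 1, lam2 θ < lam2 (Ω t)) :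
    Tendsto (fun t : ℝ => (lam2 (Ω t) - lam2 θ) / (lam1 (Ω t) - lam1 θ))
      (nhdsWithin 0 (Set.Ioo (0:ℝ) 1)) (nhds 0) := by
  have hlim : Tendsto (fun t : ℝ => -t / (1 - t)) (nhdsWithin 0 (Set.Ioo (0:ℝ) 1)) (nhds 0) := by
    have hc : ContinuousAt (fun t : ℝ => -t / (1 - t)) 0 :=
      ContinuousAt.div (by fun_prop) (by fun_prop) (by norm_num)
    have h0 := hc.tendsto
    simp only [neg_zero, zero_div] at h0
    exact h0.mono_left nhdsWithin_le_nhds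
  have hbound : ∀ t ∈ Set.Ioo (0:ℝ) 1,
      -t / (1 - t) ≤ (lam2 (Ω t) - lam2 θ) / (lam1 (Ω t) - lam1 θ) ∧
        (lam2 (Ω t) - lam2 θ) / (lam1 (Ω t) - lam1 θ) ≤ 0 := by
    intro t ht
    have hm := hmin t ht θ
    have ha : 0 < lam2 (Ω t) - lam2 θ := sub_pos.mpr (hKS t ht)
    have h1 : 0 < 1 - t := sub_pos.mpr ht.2
    have hb : lam1 (Ω t) - lam1 θ < 0 := by
      have := mul_pos h1 ha
      by_contra! hge
      have := mul_nonneg ht.1.le hge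
      linarith
    refine ⟨?_, div_nonpos_of_nonneg_of_nonpos ha.le hb.le⟩
    rw [le_div_iff_of_neg hb, div_mul_eq_mul_div, le_div_iff₀ h1]
    linarith
  refine tendsto_of_tendsto_of_tendsto_of_le_of_le' hlim tendsto_const_nhds ?_ ?_
  · filter_upwards [self_mem_nhdsWithin] with t ht using (hbound t ht).1
  · filter_upwards [self_mem_nhdsWithin] with t ht using (hbound t ht).2
end

section
/- (Abstract form of the limits (4.3) in Theorem 4.2.) Let Ω : (0,1) → ι be such that for every t ∈ (0,1), Ω(t) minimizes F_t; let b, θ ∈ ι satisfy λ₁(b) < λ₁(Ω(t)) and λ₂(θ) < λ₂(Ω(t)) for every t ∈ (0,1). Then λ₂(Ω(t)) → λ₂(θ) as t → 0 from the right, and λ₁(Ω(t)) → λ₁(b) as t → 1 from the left (limits along the neighborhood filters within (0,1)). -/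
/-!
Both limits are squeezes. Comparing the minimizer `Ω t` with `θ` (resp. `b`) and discarding
the other eigenvalue of `Ω t` through its lower bound `lam1 b` (resp. `lam2 θ`) leaves an error
of size `t / (1 - t)` (resp. `(1 - t) / t`), which vanishes as `t → 0` (resp. `t → 1`).
-/

open Filter

/-- **abstract form of the limits (4.3) in Theorem 4.2.**
In the abstract setting of problem (P): if `Ω t` minimizes `F_t` for every
`t ∈ (0,1)`, and `b, θ` satisfy `λ₁(b) < λ₁(Ω t)` and `λ₂(θ) < λ₂(Ω t)` for every
`t ∈ (0,1)`, then `λ₂(Ω t) → λ₂(θ)` as `t → 0⁺` and `λ₁(Ω t) → λ₁(b)` as `t → 1⁻`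
(limits within `(0,1)`). -/
theorem eigenvalue_limits {ι : Type*} [Nonempty ι] (lam1 lam2 : ι → ℝ)
    (Ω : ℝ → ι)
    (hmin : ∀ t ∈ Set.Ioo (0:ℝ) 1, ∀ z : ι,
      t * lam1 (Ω t) + (1 - t) * lam2 (Ω t) ≤ t * lam1 z + (1 - t) * lam2 z)
    (b θ : ι)
    (hFK : ∀ t ∈ Set.Ioo (0:ℝ) 1, lam1 b < lam1 (Ω t))
    (hKS : ∀ t ∈ Set.Ioo (0:ℝ) 1, lam2 θ < lam2 (Ω t)) :
    Tendsto (fun t : ℝ => lam2 (Ω t)) (nhdsWithin 0 (Set.Ioo (0:ℝ) 1))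
        (nhds (lam2 θ)) ∧
      Tendsto (fun t : ℝ => lam1 (Ω t)) (nhdsWithin 1 (Set.Ioo (0:ℝ) 1))
        (nhds (lam1 b)) := by
  constructor
  -- Testing minimality against `θ` and bounding `lam1 (Ω t)` below by `lam1 b` gives
  -- `lam2 θ < lam2 (Ω t) ≤ lam2 θ + t / (1 - t) * (lam1 θ - lam1 b)`: squeeze as `t → 0`.
  · have hbound : Tendsto (fun t : ℝ => lam2 θ + t / (1 - t) * (lam1 θ - lam1 b))
        (nhdsWithin 0 (Set.Ioo (0:ℝ) 1)) (nhds (lam2 θ)) := by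
      have hc : ContinuousAt (fun t : ℝ => lam2 θ + t / (1 - t) * (lam1 θ - lam1 b)) 0 := by
        fun_prop (disch := norm_num)
      simpa using hc.tendsto.mono_left nhdsWithin_le_nhds
    refine tendsto_of_tendsto_of_tendsto_of_le_of_le' tendsto_const_nhds hbound ?_ ?_
    · filter_upwards [self_mem_nhdsWithin] with t ht using (hKS t ht).le
    · filter_upwards [self_mem_nhdsWithin] with t ht
      have h1t : 0 < 1 - t := sub_pos.2 ht.2
      have hFKt := mul_lt_mul_of_pos_left (hFK t ht) ht.1
      have hdiff : lam2 (Ω t) - lam2 θ ≤ t * (lam1 θ - lam1 b) / (1 - t) := by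
        rw [le_div_iff₀ h1t]
        linarith [hmin t ht θ]
      rw [div_mul_eq_mul_div]
      linarith
  -- Symmetrically, testing against `b` and bounding `lam2 (Ω t)` below by `lam2 θ` gives
  -- `lam1 b < lam1 (Ω t) ≤ lam1 b + (1 - t) / t * (lam2 b - lam2 θ)`: squeeze as `t → 1`.
  · have hbound : Tendsto (fun t : ℝ => lam1 b + (1 - t) / t * (lam2 b - lam2 θ))
        (nhdsWithin 1 (Set.Ioo (0:ℝ) 1)) (nhds (lam1 b)) := by
      have hc : ContinuousAt (fun t : ℝ => lam1 b + (1 - t) / t * (lam2 b - lam2 θ)) 1 := by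
        fun_prop (disch := norm_num)
      simpa using hc.tendsto.mono_left nhdsWithin_le_nhds
    refine tendsto_of_tendsto_of_tendsto_of_le_of_le' tendsto_const_nhds hbound ?_ ?_
    · filter_upwards [self_mem_nhdsWithin] with t ht using (hFK t ht).le
    · filter_upwards [self_mem_nhdsWithin] with t ht
      have hKSt := mul_lt_mul_of_pos_left (hKS t ht) (sub_pos.2 ht.2)
      have hdiff : lam1 (Ω t) - lam1 b ≤ (1 - t) * (lam2 b - lam2 θ) / t := by
        rw [le_div_iff₀ ht.1]
        linarith [hmin t ht b]
      rw [div_mul_eq_mul_div]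
      linarith
end
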